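/- arXiv:2406.07464 — 2 statements merged into one kernel-verified Lean document; each statement's English description precedes it below -/
import Mathlib

section
/- Let Z be a standard Gaussian vector on ℝ^q, h > 0, κ ∈ ℝ, ζ ∈ ℝ^d, and let σ : ℝ^d → M_{d,q}(ℝ) be Lipschitz continuous and ⪯-convex. Then for every convex function f : ℝ^d → ℝ with at most linear growth, the function x ↦ E f(x + hκ(x − ζ) + √h · σ(x) Z) is convex on ℝ^d. -/
open MeasureTheory ProbabilityTheory Matrix

/-- A matrix-valued map `σ : ℝ^d → M_{d,q}(ℝ)` is `⪯`-convex if for every `x, y` and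
`l ∈ [0,1]` there are orthogonal matrices `O₁, O₂` with
`σ(l x + (1−l) y) ⪯ l σ(x) O₁ + (1−l) σ(y) O₂` for the preorder
`A ⪯ B ↔ B Bᵀ − A Aᵀ` positive semi-definite. -/
def SqConvexMap {d q : ℕ} (σ : (Fin d → ℝ) → Matrix (Fin d) (Fin q) ℝ) : Prop :=
  ∀ x y : Fin d → ℝ, ∀ l ∈ Set.Icc (0 : ℝ) 1,
    ∃ O₁ O₂ : Matrix (Fin q) (Fin q) ℝ, O₁ * O₁ᵀ = 1 ∧ O₂ * O₂ᵀ = 1 ∧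
      Matrix.PosSemidef
        ((l • (σ x * O₁) + (1 - l) • (σ y * O₂)) *
            (l • (σ x * O₁) + (1 - l) • (σ y * O₂))ᵀ -
          σ (l • x + (1 - l) • y) * (σ (l • x + (1 - l) • y))ᵀ)

lemma charFunDual_gaussianReal (v : NNReal) (L : StrongDual ℝ ℝ) :
    charFunDual (gaussianReal 0 v) L = Complex.exp (-((v * L 1 ^ 2 : ℝ) : ℂ) / 2) := by
  have hL : ∀ x, L x = L 1 * x := fun x => by
    simpa [mul_comm] using L.map_smul x 1
  have : charFunDual (gaussianReal 0 v) L = charFun (gaussianReal 0 v) (L 1) := by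
    rw [charFunDual_apply, charFun_apply_real]
    exact integral_congr_ae (.of_forall fun x => by simp only [hL x, Complex.ofReal_mul])
  rw [this, charFun_gaussianReal]
  congr 1
  push_cast
  ring

lemma charFunDual_map_mulVec_pi_gaussianReal {m ι : Type*} [Fintype m] [Fintype ι] [DecidableEq m]
    (A : Matrix m ι ℝ) (L : StrongDual ℝ (m → ℝ)) :
    charFunDual ((Measure.pi fun _ : ι => gaussianReal 0 1).map (A *ᵥ ·)) L =
      Complex.exp (-(((fun i => L (Pi.single i 1)) ⬝ᵥ
        (A * Aᵀ) *ᵥ (fun i => L (Pi.single i 1)) : ℝ) : ℂ) / 2) := by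
  classical
  have hL : ∀ x, L x = (fun i => L (Pi.single i 1)) ⬝ᵥ x := by
    intro x
    conv_lhs => rw [pi_eq_sum_univ' x, map_sum]
    simp [dotProduct, mul_comm]
  set v : m → ℝ := fun i => L (Pi.single i 1)
  have hA : (A *ᵥ ·) = ⇑A.mulVecLin.toContinuousLinearMap := rfl
  rw [hA, charFunDual_map, charFunDual_pi]
  simp_rw [charFunDual_gaussianReal]
  rw [← Complex.exp_sum, ← Finset.sum_div, Finset.sum_neg_distrib, ← Complex.ofReal_sum]
  congr 5
  rw [← mulVec_mulVec, dotProduct_mulVec, mulVec_transpose]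
  refine Finset.sum_congr rfl fun i _ => ?_
  have : L (A.col i) = (v ᵥ* A) i := hL _
  simp [this, sq]

/-- The law of `A Z`, for `Z` a standard Gaussian vector, depends on `A` only through `A Aᵀ`. -/
lemma map_mulVec_pi_gaussianReal_eq {m ι κ : Type*} [Fintype m] [Fintype ι] [Fintype κ]
    {A : Matrix m ι ℝ} {B : Matrix m κ ℝ} (hAB : A * Aᵀ = B * Bᵀ) :
    (Measure.pi fun _ : ι => gaussianReal 0 1).map (A *ᵥ ·) =
      (Measure.pi fun _ : κ => gaussianReal 0 1).map (B *ᵥ ·) := by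
  classical
  refine Measure.ext_of_charFunDual (funext fun L => ?_)
  rw [charFunDual_map_mulVec_pi_gaussianReal, charFunDual_map_mulVec_pi_gaussianReal, hAB]

/-- A Gaussian expectation depends on the factor `A` only through `A Aᵀ`. -/
lemma integral_add_mulVec_gaussian_eq {m ι κ : Type*} [Fintype m] [Fintype ι] [Fintype κ]
    {f : (m → ℝ) → ℝ} (hf : ConvexOn ℝ Set.univ f) (b : m → ℝ)
    {A : Matrix m ι ℝ} {B : Matrix m κ ℝ} (hAB : A * Aᵀ = B * Bᵀ) :
    ∫ z, f (b + A *ᵥ z) ∂(Measure.pi fun _ : ι => gaussianReal 0 1) =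
      ∫ z, f (b + B *ᵥ z) ∂(Measure.pi fun _ : κ => gaussianReal 0 1) := by
  have hcont : Continuous f := continuousOn_univ.mp (hf.continuousOn isOpen_univ)
  have hmeas {μ : Measure (m → ℝ)} : AEStronglyMeasurable (fun y => f (b + y)) μ :=
    (hcont.comp (by fun_prop)).aestronglyMeasurable
  have hA : Measurable (A *ᵥ ·) := Continuous.measurable (by fun_prop)
  have hB : Measurable (B *ᵥ ·) := Continuous.measurable (by fun_prop)
  rw [← integral_map (φ := (A *ᵥ ·)) (f := fun y => f (b + y)) hA.aemeasurable hmeas,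
    map_mulVec_pi_gaussianReal_eq hAB, integral_map hB.aemeasurable hmeas]

lemma integrable_comp_add_mulVec {m ι : Type*} [Fintype m] [Fintype ι]
    {f : (m → ℝ) → ℝ} (hf : ConvexOn ℝ Set.univ f)
    {C : ℝ} (hgrowth : ∀ x, |f x| ≤ C * (1 + ‖x‖)) (b : m → ℝ) (A : Matrix m ι ℝ) :
    Integrable (fun z => f (b + A *ᵥ z)) (Measure.pi fun _ : ι => gaussianReal 0 1) := by
  have hcont : Continuous f := continuousOn_univ.mp (hf.continuousOn isOpen_univ)
  have hint : Integrable (fun z : ι → ℝ => b + A.mulVecLin.toContinuousLinearMap z)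
      (Measure.pi fun _ : ι => gaussianReal 0 1) :=
    (integrable_const b).add
      (A.mulVecLin.toContinuousLinearMap.integrable_comp
        (.of_eval fun i => integrable_eval IsGaussian.integrable_id))
  refine (((integrable_const 1).add hint.norm).const_mul C).mono'
    (hcont.comp (by fun_prop)).aestronglyMeasurable (.of_forall fun z => ?_)
  simpa using hgrowth (b + A *ᵥ z)

open scoped MatrixOrder in
/-- Gaussian expectations of convex functions are monotone in the covariance matrix. -/
lemma integral_convex_gaussian_mono {m ι : Type*} [Fintype m] [Fintype ι]
    {f : (m → ℝ) → ℝ} (hf : ConvexOn ℝ Set.univ f)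
    {C : ℝ} (hgrowth : ∀ x, |f x| ≤ C * (1 + ‖x‖)) (b : m → ℝ) {A B : Matrix m ι ℝ}
    (hAB : (B * Bᵀ - A * Aᵀ).PosSemidef) :
    ∫ z, f (b + A *ᵥ z) ∂(Measure.pi fun _ : ι => gaussianReal 0 1) ≤
      ∫ z, f (b + B *ᵥ z) ∂(Measure.pi fun _ : ι => gaussianReal 0 1) := by
  classical
  obtain ⟨S, hS⟩ := CStarAlgebra.nonneg_iff_eq_star_mul_self.mp hAB.nonneg
  rw [star_eq_conjTranspose, conjTranspose_eq_transpose_of_trivial, sub_eq_iff_eq_add'] at hS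
  rw [integral_add_mulVec_gaussian_eq hf b (A := A) (B := fromCols A (0 : Matrix m m ℝ))
    (by rw [transpose_fromCols, fromCols_mul_fromRows]; simp)]
  have hplus := integral_add_mulVec_gaussian_eq hf b (A := B) (B := fromCols A Sᵀ)
    (by rw [transpose_fromCols, fromCols_mul_fromRows]; simp [hS])
  have hminus := integral_add_mulVec_gaussian_eq hf b (A := B) (B := fromCols A (-Sᵀ))
    (by rw [transpose_fromCols, fromCols_mul_fromRows]; simp [hS])
  have int (E : Matrix m (ι ⊕ m) ℝ) := integrable_comp_add_mulVec hf hgrowth b E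
  calc
    _ ≤ ∫ z, ((1 / 2 : ℝ) * f (b + fromCols A Sᵀ *ᵥ z) +
          (1 / 2 : ℝ) * f (b + fromCols A (-Sᵀ) *ᵥ z))
          ∂(Measure.pi fun _ : ι ⊕ m => gaussianReal 0 1) := by
      refine integral_mono (int _) (((int _).const_mul _).add ((int _).const_mul _)) fun z => ?_
      have := hf.2 (Set.mem_univ (b + fromCols A Sᵀ *ᵥ z))
        (Set.mem_univ (b + fromCols A (-Sᵀ) *ᵥ z))
        (by norm_num : (0 : ℝ) ≤ 1 / 2) (by norm_num : (0 : ℝ) ≤ 1 / 2) (by norm_num)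
      refine le_trans (le_of_eq (congrArg f ?_)) this
      ext i
      simp [fromCols_mulVec, neg_mulVec]
      ring
    _ = _ := by
      rw [integral_add ((int _).const_mul _) ((int _).const_mul _), integral_const_mul,
        integral_const_mul, ← hplus, ← hminus]
      ring

/-- **Propagation of convexity by one Euler step with affine drift and `⪯`-convex volatility.**
If `Z` is a standard Gaussian vector on `ℝ^q`, `σ` is Lipschitz and `⪯`-convex, then for every
convex `f : ℝ^d → ℝ` with at most linear growth, the map
`x ↦ E f(x + hκ(x − ζ) + √h σ(x) Z)` is convex. -/
theorem eulerStep_convexOn {d q : ℕ} {Ω : Type*} [MeasurableSpace Ω]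
    (P : Measure Ω) [IsProbabilityMeasure P]
    (Z : Ω → Fin q → ℝ) (hZmeas : Measurable Z)
    (hZ : Measure.map Z P = Measure.pi fun _ => gaussianReal 0 1)
    (h κ : ℝ) (hh : 0 < h) (ζ : Fin d → ℝ)
    (σ : (Fin d → ℝ) → Matrix (Fin d) (Fin q) ℝ)
    (K : ℝ) (hσLip : ∀ x y i j, |σ x i j - σ y i j| ≤ K * ‖x - y‖)
    (hσcvx : SqConvexMap σ)
    (f : (Fin d → ℝ) → ℝ) (hf : ConvexOn ℝ Set.univ f)
    (C : ℝ) (hgrowth : ∀ x, |f x| ≤ C * (1 + ‖x‖)) :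
    ConvexOn ℝ Set.univ
      (fun x => ∫ ω, f (x + (h * κ) • (x - ζ) +
        Real.sqrt h • (σ x).mulVec (Z ω)) ∂P) := by
  have hstep (x : Fin d → ℝ) :
      ∫ ω, f (x + (h * κ) • (x - ζ) + √h • (σ x).mulVec (Z ω)) ∂P =
        ∫ z, f (x + (h * κ) • (x - ζ) + (√h • σ x) *ᵥ z)
          ∂(Measure.pi fun _ : Fin q => gaussianReal 0 1) := by
    rw [← hZ, integral_map hZmeas.aemeasurable]
    · simp_rw [smul_mulVec]
    · rw [hZ]
      exact (integrable_comp_add_mulVec hf hgrowth _ _).aestronglyMeasurable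
  simp_rw [hstep]
  refine ⟨convex_univ, fun x _ y _ a b ha hb hab => ?_⟩
  obtain rfl : b = 1 - a := by linarith
  obtain ⟨O₁, O₂, hO₁, hO₂, hpos⟩ := hσcvx x y a ⟨ha, by linarith⟩
  have hrot (A : Matrix (Fin d) (Fin q) ℝ) {O : Matrix (Fin q) (Fin q) ℝ} (hO : O * Oᵀ = 1) :
      (√h • A) * (√h • A)ᵀ = (√h • (A * O)) * (√h • (A * O))ᵀ := by
    simp [Matrix.mul_assoc, ← Matrix.mul_assoc O, hO]
  have int (c : Fin d → ℝ) (E : Matrix (Fin d) (Fin q) ℝ) :=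
    integrable_comp_add_mulVec hf hgrowth c E
  beta_reduce
  rw [integral_add_mulVec_gaussian_eq hf _ (hrot (σ x) hO₁),
    integral_add_mulVec_gaussian_eq hf _ (hrot (σ y) hO₂)]
  simp only [smul_eq_mul]
  rw [← integral_const_mul, ← integral_const_mul,
    ← integral_add ((int _ _).const_mul _) ((int _ _).const_mul _)]
  refine (integral_convex_gaussian_mono hf hgrowth _
    (B := √h • (a • (σ x * O₁) + (1 - a) • (σ y * O₂))) ?_).trans
    (integral_mono (int _ _) (((int _ _).const_mul _).add ((int _ _).const_mul _)) fun z => ?_)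
  · convert hpos.smul hh.le using 1
    simp only [transpose_smul, smul_mul, Matrix.mul_smul, smul_smul, Real.mul_self_sqrt hh.le, smul_sub]
  · refine le_trans (le_of_eq (congrArg f ?_)) (hf.2 (Set.mem_univ _) (Set.mem_univ _) ha hb hab)
    ext i
    simp [smul_mulVec, add_mulVec]
    ring
end

section
/- Under the standing assumptions on σ, β, h, λ and s_h, and assuming moreover that β is affine, the truncated Euler step is convex for the convex order: for every convex function f : ℝ → ℝ, the map x ↦ E f(E^h(x, Z̃^h)) is convex on ℝ. -/
open MeasureTheory ProbabilityTheory

/-- The mean of `|m + t U|` for `U` uniform on `[-1, 1]`, as a function of `m` and `t ≥ 0`. -/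
noncomputable def uniformMeanAbs (m t : ℝ) : ℝ :=
  if |m| < t then (t + m ^ 2 / t) / 2 else |m|

lemma abs_le_uniformMeanAbs (m t : ℝ) : |m| ≤ uniformMeanAbs m t := by
  unfold uniformMeanAbs
  split_ifs with hmt
  · have ht : 0 < t := (abs_nonneg m).trans_lt hmt
    have : t + m ^ 2 / t - 2 * |m| = (t - |m|) ^ 2 / t := by
      rw [← sq_abs m]; field_simp; ring
    have : 0 ≤ (t - |m|) ^ 2 / t := by positivity
    linarith
  · exact le_rfl

lemma uniformMeanAbs_mul {c : ℝ} (hc : 0 < c) (m t : ℝ) :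
    uniformMeanAbs (c * m) (c * t) = c * uniformMeanAbs m t := by
  unfold uniformMeanAbs
  have : |c * m| < c * t ↔ |m| < t := by
    rw [abs_mul, abs_of_pos hc, mul_lt_mul_iff_right₀ hc]
  simp only [this]
  split_ifs with hmt
  · have ht : 0 < t := (abs_nonneg m).trans_lt hmt
    field_simp
  · rw [abs_mul, abs_of_pos hc]

lemma tangent_le_of_nonneg {θ l a e d t u : ℝ} (hθ0 : 0 ≤ θ) (hθ1 : θ < 1)
    (hθ : θ ^ 2 ≤ 2 * (1 - θ) ^ 2) (ha : 0 ≤ a) (hla : l ^ 2 + a ≤ θ ^ 2)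
    (he : |e| ≤ 1) (hd : 0 ≤ d) (ht : 0 < t) (hed : |e + d| ≤ t) (htl : |t - 1| ≤ l * d)
    (hu : 1 + 2 * u - a * d ^ 2 ≤ t ^ 2) :
    (1 + e ^ 2) / 2 + e * d + (1 - e ^ 2) / 2 * u ≤ (t + (e + d) ^ 2 / t) / 2 := by
  obtain ⟨he1, he2⟩ := abs_le.1 he
  have hlθ : l ≤ θ := by nlinarith
  have hτ : |t - 1| ≤ θ * d := htl.trans (by gcongr)
  have hτ2 : (t - 1) ^ 2 ≤ l ^ 2 * d ^ 2 := by
    rw [← sq_abs, ← mul_pow]; gcongr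
  have hut : u - (t - 1) ≤ (1 - θ) ^ 2 * d ^ 2 := by
    nlinarith [mul_le_mul_of_nonneg_right (hla.trans hθ) (sq_nonneg d)]
  have h1 : (1 - θ) * d ≤ d - e * (t - 1) := by
    have : e * (t - 1) ≤ |e| * |t - 1| := by rw [← abs_mul]; exact le_abs_self _
    have : |e| * |t - 1| ≤ 1 * (θ * d) := by gcongr
    linarith
  have h0 : 0 ≤ (1 - θ) * d := mul_nonneg (by linarith) hd
  have h2 : t * ((1 - θ) ^ 2 * d ^ 2) ≤ (d - e * (t - 1)) ^ 2 := by
    rcases le_total t 1 with h | h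
    · have : t * ((1 - θ) ^ 2 * d ^ 2) ≤ 1 * ((1 - θ) ^ 2 * d ^ 2) := by gcongr
      nlinarith
    · have h3 : (1 - θ) * d ≤ d - (t - 1) := by linarith [le_abs_self (t - 1)]
      have h4 : t * (d - (t - 1)) ≤ d - e * (t - 1) := by
        nlinarith [(abs_le.1 hed).2, mul_nonneg (sub_nonneg.2 h) (sub_nonneg.2 (abs_le.1 hed).2)]
      have h5 : t * ((1 - θ) * d) ≤ d - e * (t - 1) := (by gcongr : _ ≤ _).trans h4
      calc t * ((1 - θ) ^ 2 * d ^ 2) = (t * ((1 - θ) * d)) * ((1 - θ) * d) := by ring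
        _ ≤ (d - e * (t - 1)) * (d - e * (t - 1)) :=
          mul_le_mul h5 h1 h0 (h0.trans h1)
        _ = _ := by ring
  have he3 : 0 ≤ 1 - e ^ 2 := by nlinarith
  have h6 : t * ((1 - e ^ 2) * (u - (t - 1))) ≤ (d - e * (t - 1)) ^ 2 := by
    have h7 : (1 - e ^ 2) * (u - (t - 1)) ≤ (1 - θ) ^ 2 * d ^ 2 := by
      have : (1 - e ^ 2) * (u - (t - 1)) ≤ (1 - e ^ 2) * ((1 - θ) ^ 2 * d ^ 2) := by gcongr
      have : 0 ≤ e ^ 2 * ((1 - θ) ^ 2 * d ^ 2) := by positivity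
      linarith
    exact (mul_le_mul_of_nonneg_left h7 ht.le).trans h2
  have h8 : (t + (e + d) ^ 2 / t) / 2 - ((1 + e ^ 2) / 2 + e * d + (1 - e ^ 2) / 2 * u)
      = ((d - e * (t - 1)) ^ 2 - t * ((1 - e ^ 2) * (u - (t - 1)))) / (2 * t) := by
    field_simp; ring
  have : 0 ≤ ((d - e * (t - 1)) ^ 2 - t * ((1 - e ^ 2) * (u - (t - 1)))) / (2 * t) :=
    div_nonneg (by linarith) (by linarith)
  linarith

lemma tangent_le {θ l a e d t u : ℝ} (hθ0 : 0 ≤ θ) (hθ1 : θ < 1)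
    (hθ : θ ^ 2 ≤ 2 * (1 - θ) ^ 2) (ha : 0 ≤ a) (hla : l ^ 2 + a ≤ θ ^ 2)
    (he : |e| ≤ 1) (ht : 0 < t) (hed : |e + d| ≤ t) (htl : |t - 1| ≤ l * |d|)
    (hu : 1 + 2 * u - a * d ^ 2 ≤ t ^ 2) :
    (1 + e ^ 2) / 2 + e * d + (1 - e ^ 2) / 2 * u ≤ (t + (e + d) ^ 2 / t) / 2 := by
  rcases le_total 0 d with hd | hd
  · rw [abs_of_nonneg hd] at htl
    exact tangent_le_of_nonneg hθ0 hθ1 hθ ha hla he hd ht hed htl hu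
  · rw [abs_of_nonpos hd] at htl
    have := tangent_le_of_nonneg (e := -e) (d := -d) (u := u) hθ0 hθ1 hθ ha hla
      (by rwa [abs_neg]) (by linarith) ht (by rwa [← neg_add, abs_neg]) htl (by rwa [neg_sq])
    rw [← neg_add, neg_sq, neg_sq, neg_mul_neg] at this
    exact this

lemma tangent_le_uniformMeanAbs_one {θ l a e d t u : ℝ} (hθ0 : 0 ≤ θ) (hθ1 : θ < 1)
    (hθ : θ ^ 2 ≤ 2 * (1 - θ) ^ 2) (hl : 0 ≤ l) (ha : 0 ≤ a) (hla : l ^ 2 + a ≤ θ ^ 2)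
    (he : |e| ≤ 1) (ht : 0 ≤ t) (htl : |t - 1| ≤ l * |d|)
    (hu : 1 + 2 * u - a * d ^ 2 ≤ t ^ 2) (hul : u ≤ l * |d|) :
    (1 + e ^ 2) / 2 + e * d + (1 - e ^ 2) / 2 * u ≤ uniformMeanAbs (e + d) t := by
  unfold uniformMeanAbs
  split_ifs with hmt
  · exact tangent_le hθ0 hθ1 hθ ha hla he ((abs_nonneg _).trans_lt hmt) hmt.le htl hu
  push Not at hmt
  obtain ⟨he1, he2⟩ := abs_le.1 he
  have he3 : 0 ≤ 1 - e ^ 2 := by nlinarith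
  have hld : 0 ≤ l * |d| := by positivity
  rcases le_total |e + d| (1 + l * |d|) with h1 | h1
  · rcases (abs_nonneg (e + d)).eq_or_lt with h0 | h0
    · have h00 : t = 0 := by linarith
      have hd : d = -e := by linarith [abs_eq_zero.1 h0.symm]
      have hd1 : |d| ≤ 1 := by rw [hd, abs_neg]; exact he
      have h2 : (1 : ℝ) ≤ l * |d| := by simpa [h00] using htl
      have : l < 1 := by nlinarith
      nlinarith
    have h3 := tangent_le (t := |e + d|) (d := d) (u := u) hθ0 hθ1 hθ ha hla he h0 le_rfl
      (abs_le.2 ⟨by linarith [(abs_le.1 htl).1], by linarith⟩) (hu.trans (by gcongr))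
    have h4 : (|e + d| + (e + d) ^ 2 / |e + d|) / 2 = |e + d| := by
      rw [← sq_abs (e + d)]; field_simp; ring
    rwa [h4] at h3
  · have h2 : (1 - e ^ 2) / 2 * u ≤ (1 - e ^ 2) / 2 * (|e + d| - 1) := by
      gcongr; linarith
    have hA : 1 ≤ |e + d| := by linarith
    rcases le_total 0 (e + d) with h | h
    · rw [abs_of_nonneg h] at *
      nlinarith [mul_nonneg (mul_nonneg (sub_nonneg.2 he2) (sub_nonneg.2 he2))
        (by linarith : 0 ≤ e + d)]
    · rw [abs_of_nonpos h] at *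
      nlinarith [mul_nonneg (mul_nonneg (by linarith : 0 ≤ 1 + e) (by linarith : 0 ≤ 1 + e))
        (by linarith : 0 ≤ -(e + d))]

lemma convexOn_univ_of_forall_exists_support {g : ℝ → ℝ}
    (hg : ∀ x₀, ∃ p, ∀ x, g x₀ + p * (x - x₀) ≤ g x) : ConvexOn ℝ Set.univ g := by
  refine ⟨convex_univ, fun x _ y _ μ ν hμ hν hμν => ?_⟩
  simp only [smul_eq_mul]
  obtain ⟨p, hp⟩ := hg (μ * x + ν * y)
  have h1 := mul_le_mul_of_nonneg_left (hp x) hμ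
  have h2 := mul_le_mul_of_nonneg_left (hp y) hν
  obtain rfl : μ = 1 - ν := by linarith
  linarith

lemma ConvexOn.exists_support {f : ℝ → ℝ} (hf : ConvexOn ℝ Set.univ f) (x₀ : ℝ) :
    ∃ p, ∀ x, f x₀ + p * (x - x₀) ≤ f x := by
  have h_int (x : ℝ) : x ∈ interior (Set.univ : Set ℝ) := by simp
  refine ⟨derivWithin f (Set.Ioi x₀) x₀, fun x => ?_⟩
  rcases lt_trichotomy x x₀ with hx | rfl | hx
  · have h1 := (hf.slope_le_leftDeriv_of_mem_interior (Set.mem_univ x) (h_int x₀) hx).trans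
      (hf.leftDeriv_le_rightDeriv_of_mem_interior (h_int x₀))
    rw [slope_def_field, div_le_iff₀ (by linarith)] at h1
    linarith
  · simp
  · have h1 := hf.rightDeriv_le_slope_of_mem_interior (h_int x₀) (Set.mem_univ x) hx
    rw [slope_def_field, le_div_iff₀ (by linarith)] at h1
    linarith

lemma le_of_forall_mul_le_sq {η C : ℝ} (h : ∀ d, 0 < d → η * d ≤ C * d ^ 2) : η ≤ 0 := by
  by_contra! hη
  have hC : 0 < |C| + 1 := by positivity
  have h1 := h (η / (2 * (|C| + 1))) (by positivity)
  have h2 : C * (η / (2 * (|C| + 1))) ^ 2 ≤ (|C| + 1) * (η / (2 * (|C| + 1))) ^ 2 := by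
    gcongr; linarith [le_abs_self C]
  have h3 : (|C| + 1) * (η / (2 * (|C| + 1))) ^ 2 = η * (η / (2 * (|C| + 1))) / 2 := by
    field_simp
  have h4 : 0 < η * (η / (2 * (|C| + 1))) := by positivity
  linarith

lemma convexOn_uniformMeanAbs {θ l a α₀ α₁ : ℝ} {T : ℝ → ℝ} (hθ0 : 0 ≤ θ) (hθ1 : θ < 1)
    (hθ : θ ^ 2 ≤ 2 * (1 - θ) ^ 2) (hl : 0 ≤ l) (ha : 0 ≤ a) (hα : 0 < α₁)
    (hla : l ^ 2 + a ≤ (θ * α₁) ^ 2) (hT0 : ∀ x, 0 ≤ T x)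
    (hTlip : ∀ x y, |T x - T y| ≤ l * |x - y|)
    (hT : ConvexOn ℝ Set.univ fun x => T x ^ 2 + a * x ^ 2) :
    ConvexOn ℝ Set.univ fun x => uniformMeanAbs (α₀ + α₁ * x) (T x) := by
  refine convexOn_univ_of_forall_exists_support fun x₀ => ?_
  rcases le_or_gt (T x₀) |α₀ + α₁ * x₀| with h0 | h0
  · have hval : uniformMeanAbs (α₀ + α₁ * x₀) (T x₀) = |α₀ + α₁ * x₀| := if_neg h0.not_gt
    rw [hval]
    rcases le_total 0 (α₀ + α₁ * x₀) with hs | hs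
    · refine ⟨α₁, fun x => le_trans ?_ (abs_le_uniformMeanAbs _ _)⟩
      rw [abs_of_nonneg hs]
      linarith [le_abs_self (α₀ + α₁ * x)]
    · refine ⟨-α₁, fun x => le_trans ?_ (abs_le_uniformMeanAbs _ _)⟩
      rw [abs_of_nonpos hs]
      linarith [neg_abs_le (α₀ + α₁ * x)]
  set t₀ := T x₀ with ht₀
  have htpos : 0 < t₀ := (abs_nonneg _).trans_lt h0
  obtain ⟨p', hp'⟩ := hT.exists_support x₀
  obtain ⟨p, rfl⟩ : ∃ p, p' = p + 2 * a * x₀ := ⟨p' - 2 * a * x₀, by ring⟩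
  have hp (x : ℝ) : t₀ ^ 2 + p * (x - x₀) - a * (x - x₀) ^ 2 ≤ T x ^ 2 := by
    have := hp' x
    simp only [← ht₀] at this
    linarith
  have hquad (d : ℝ) : p * d ≤ 2 * t₀ * l * |d| + (l ^ 2 + a) * d ^ 2 := by
    have h1 := hp (x₀ + d)
    have h2 := hTlip (x₀ + d) x₀
    rw [add_sub_cancel_left] at h1 h2
    have h3 : T (x₀ + d) ≤ t₀ + l * |d| := by linarith [(abs_le.1 h2).2]
    have h4 : T (x₀ + d) ^ 2 ≤ (t₀ + l * |d|) ^ 2 := pow_le_pow_left₀ (hT0 _) h3 2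
    linarith [sq_abs d, congrArg (l ^ 2 * ·) (sq_abs d)]
  have hpl : |p| ≤ 2 * t₀ * l := by
    refine abs_le'.2 ⟨?_, ?_⟩
    · have := le_of_forall_mul_le_sq (η := p - 2 * t₀ * l) (C := l ^ 2 + a) fun d hd => by
        have := hquad d
        rw [abs_of_pos hd] at this
        linarith
      linarith
    · have := le_of_forall_mul_le_sq (η := -p - 2 * t₀ * l) (C := l ^ 2 + a) fun d hd => by
        have := hquad (-d)
        rw [abs_neg, abs_of_pos hd, neg_sq] at this
        linarith
      linarith
  set m₀ := α₀ + α₁ * x₀ with hm₀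
  have hval : uniformMeanAbs m₀ t₀ = (t₀ + m₀ ^ 2 / t₀) / 2 := if_pos h0
  refine ⟨m₀ / t₀ * α₁ + (1 - (m₀ / t₀) ^ 2) / 2 * (p / (2 * t₀)), fun x => ?_⟩
  have habs : |α₁ * (x - x₀) / t₀| = α₁ * |x - x₀| / t₀ := by
    rw [abs_div, abs_mul, abs_of_pos hα, abs_of_pos htpos]
  have hkey := tangent_le_uniformMeanAbs_one (θ := θ) (l := l / α₁) (a := a / α₁ ^ 2)
    (e := m₀ / t₀) (d := α₁ * (x - x₀) / t₀) (t := T x / t₀) (u := p * (x - x₀) / (2 * t₀ ^ 2))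
    hθ0 hθ1 hθ (by positivity) (by positivity)
    (by rw [div_pow, ← add_div, div_le_iff₀ (by positivity), ← mul_pow]; exact hla)
    (by rw [abs_div, abs_of_pos htpos, div_le_one htpos]; exact h0.le)
    (div_nonneg (hT0 x) htpos.le)
    (by
      rw [habs, div_sub_one htpos.ne', abs_div, abs_of_pos htpos]
      have : l / α₁ * (α₁ * |x - x₀| / t₀) = l * |x - x₀| / t₀ := by field_simp
      rw [this]
      exact div_le_div_of_nonneg_right (hTlip x x₀) htpos.le)
    (by
      have : 1 + 2 * (p * (x - x₀) / (2 * t₀ ^ 2)) - a / α₁ ^ 2 * (α₁ * (x - x₀) / t₀) ^ 2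
          = (t₀ ^ 2 + p * (x - x₀) - a * (x - x₀) ^ 2) / t₀ ^ 2 := by
        field_simp
      rw [this, div_pow]
      exact div_le_div_of_nonneg_right (hp x) (by positivity))
    (by
      rw [habs]
      have h1 : l / α₁ * (α₁ * |x - x₀| / t₀) = 2 * t₀ * l * |x - x₀| / (2 * t₀ ^ 2) := by
        field_simp
      rw [h1]
      refine div_le_div_of_nonneg_right ?_ (by positivity)
      calc p * (x - x₀) ≤ |p * (x - x₀)| := le_abs_self _
        _ = |p| * |x - x₀| := abs_mul _ _
        _ ≤ _ := by gcongr)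
  have hkey' := mul_le_mul_of_nonneg_left hkey htpos.le
  rw [← uniformMeanAbs_mul htpos] at hkey'
  have h1 : t₀ * (m₀ / t₀ + α₁ * (x - x₀) / t₀) = α₀ + α₁ * x := by
    rw [hm₀]; field_simp; ring
  have h2 : t₀ * (T x / t₀) = T x := by field_simp
  rw [h1, h2] at hkey'
  refine le_trans (le_of_eq ?_) hkey'
  rw [hval]
  field_simp
  ring

lemma integral_abs_add_mul {r s : ℝ} (hr : 0 ≤ r) (hs : 0 ≤ s) (m : ℝ) :
    ∫ w in -r..r, |m + s * w| = 2 * r * uniformMeanAbs m (r * s) := by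
  have hlin (u v : ℝ) : ∫ w in u..v, (m + s * w) = m * (v - u) + s * (v ^ 2 - u ^ 2) / 2 := by
    rw [intervalIntegral.integral_add (by simp) (by
      exact (continuous_const.mul continuous_id).intervalIntegrable _ _),
      intervalIntegral.integral_const_mul, integral_id]
    simp; ring
  have hpos {u v : ℝ} (huv : u ≤ v) (h : 0 ≤ m + s * u) :
      ∫ w in u..v, |m + s * w| = m * (v - u) + s * (v ^ 2 - u ^ 2) / 2 := by
    rw [← hlin]
    refine intervalIntegral.integral_congr fun w hw => abs_of_nonneg ?_
    rw [Set.uIcc_of_le huv] at hw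
    nlinarith [mul_le_mul_of_nonneg_left hw.1 hs]
  have hneg {u v : ℝ} (huv : u ≤ v) (h : m + s * v ≤ 0) :
      ∫ w in u..v, |m + s * w| = -(m * (v - u) + s * (v ^ 2 - u ^ 2) / 2) := by
    rw [← hlin, ← intervalIntegral.integral_neg]
    refine intervalIntegral.integral_congr fun w hw => abs_of_nonpos ?_
    rw [Set.uIcc_of_le huv] at hw
    nlinarith [mul_le_mul_of_nonneg_left hw.2 hs]
  unfold uniformMeanAbs
  split_ifs with h
  · have hrs : 0 < r * s := (abs_nonneg _).trans_lt h
    have hs' : 0 < s := pos_of_mul_pos_right hrs hr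
    have hr' : 0 < r := pos_of_mul_pos_left hrs hs
    obtain ⟨h1, h2⟩ := abs_lt.1 h
    have hz : m + s * (-m / s) = 0 := by field_simp; ring
    have h_int (u v : ℝ) : IntervalIntegrable (fun w => |m + s * w|) volume u v :=
      Continuous.intervalIntegrable (by fun_prop) _ _
    rw [← intervalIntegral.integral_add_adjacent_intervals (h_int (-r) (-m / s)) (h_int _ _),
      hneg (by rw [le_div_iff₀ hs']; linarith) hz.le,
      hpos (by rw [div_le_iff₀ hs']; linarith) hz.ge]
    field_simp
    ring
  · push Not at h
    rcases le_total 0 m with hm | hm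
    · rw [abs_of_nonneg hm] at h ⊢
      rw [hpos (by linarith) (by linarith)]
      ring
    · rw [abs_of_nonpos hm] at h ⊢
      rw [hneg (by linarith) (by linarith)]
      ring

lemma abs_sub_chord_le {f : ℝ → ℝ} {u v y ε : ℝ} (huv : u < v) (hy : y ∈ Set.Icc u v)
    (hu : |f y - f u| ≤ ε) (hv : |f y - f v| ≤ ε) :
    |f u + (f v - f u) / (v - u) * (y - u) - f y| ≤ ε := by
  obtain ⟨s, hs0, hs1, rfl⟩ : ∃ s, 0 ≤ s ∧ s ≤ 1 ∧ y = u + s * (v - u) :=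
    ⟨(y - u) / (v - u), div_nonneg (by linarith [hy.1]) (by linarith),
      (div_le_one (by linarith)).2 (by linarith [hy.2]), by
        rw [div_mul_cancel₀ _ (by linarith)]; ring⟩
  have h1 : (f v - f u) / (v - u) * (u + s * (v - u) - u) = s * (f v - f u) := by
    have : v - u ≠ 0 := by linarith
    field_simp; ring
  rw [h1]
  rw [abs_le] at *
  constructor <;> nlinarith

lemma ConvexOn.exists_piecewise_affine_approx {Q : (ℝ → ℝ) → Prop}
    (haff : ∀ α β : ℝ, Q fun y => α + β * y)
    (hhinge : ∀ g c k, Q g → 0 ≤ c → Q fun y => g y + c * max (y - k) 0)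
    {f : ℝ → ℝ} (hf : ConvexOn ℝ Set.univ f) {u v ε : ℝ} (huv : u < v) (hε : 0 < ε) :
    ∃ g, Q g ∧ ∀ y ∈ Set.Icc u v, |g y - f y| ≤ ε := by
  have hcont : Continuous f := by
    rw [← continuousOn_univ]; exact hf.continuousOn isOpen_univ
  obtain ⟨η, hη, hunif⟩ := Metric.uniformContinuousOn_iff.1
    (isCompact_Icc.uniformContinuousOn_of_continuous (s := Set.Icc u v) hcont.continuousOn) ε hε
  obtain ⟨N, hN⟩ := exists_nat_gt ((v - u) / η)
  have hNpos : (0 : ℝ) < N := (div_pos (by linarith) hη).trans hN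
  set δ := (v - u) / N with hδ
  have hδpos : 0 < δ := div_pos (by linarith) hNpos
  have hδη : δ < η := by rw [div_lt_iff₀ hη] at hN; rw [hδ, div_lt_iff₀ hNpos]; linarith
  have hNδ : u + N * δ = v := by rw [hδ]; field_simp; ring
  set k : ℕ → ℝ := fun i => u + i * δ with hk
  have hksucc (i : ℕ) : k (i + 1) = k i + δ := by simp only [hk]; push_cast; ring
  have hkmem {i : ℕ} (hi : i ≤ N) : k i ∈ Set.Icc u v := by
    have : (i : ℝ) ≤ N := by exact_mod_cast hi
    constructor
    · simp only [hk]; have : 0 ≤ i * δ := by positivity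
      linarith
    · rw [← hNδ]; simp only [hk]; gcongr
  set m : ℕ → ℝ := fun i => (f (k (i + 1)) - f (k i)) / (k (i + 1) - k i) with hm
  have hmδ (i : ℕ) : m i * δ = f (k (i + 1)) - f (k i) := by
    have : k (i + 1) - k i = δ := by rw [hksucc]; ring
    simp only [hm, this, div_mul_cancel₀ _ hδpos.ne']
  have hmono (i : ℕ) : 0 ≤ m (i + 1) - m i := by
    have h1 := hf.2 (Set.mem_univ (k i)) (Set.mem_univ (k (i + 1 + 1)))
      (by norm_num : (0 : ℝ) ≤ 1 / 2) (by norm_num : (0 : ℝ) ≤ 1 / 2) (by norm_num)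
    have h2 : (1 / 2 : ℝ) • k i + (1 / 2 : ℝ) • k (i + 1 + 1) = k (i + 1) := by
      simp only [smul_eq_mul, hksucc]; ring
    rw [h2] at h1
    simp only [smul_eq_mul] at h1
    have h3 : 0 ≤ (m (i + 1) - m i) * δ := by rw [sub_mul, hmδ, hmδ]; linarith
    exact nonneg_of_mul_nonneg_left h3 hδpos
  have hcell {i : ℕ} (hi : i < N) {y : ℝ} (hy : y ∈ Set.Icc (k i) (k (i + 1))) :
      |f (k i) + m i * (y - k i) - f y| ≤ ε := by
    have hyuv : y ∈ Set.Icc u v := ⟨(hkmem hi.le).1.trans hy.1, hy.2.trans (hkmem hi).2⟩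
    have hy' := hksucc i ▸ hy
    refine abs_sub_chord_le (by rw [hksucc]; linarith) hy
      (hunif y hyuv _ (hkmem hi.le) ?_).le (hunif y hyuv _ (hkmem hi) ?_).le
    · rw [Real.dist_eq, abs_lt]; constructor <;> linarith [hy'.1, hy'.2]
    · rw [Real.dist_eq, abs_lt, hksucc]; constructor <;> linarith [hy'.1, hy'.2]
  have hind : ∀ n ≤ N, ∃ g, Q g ∧ (∀ y, k n ≤ y → g y = f (k n) + m n * (y - k n)) ∧
      ∀ y ∈ Set.Icc u (k n), |g y - f y| ≤ ε := by
    intro n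
    induction n with
    | zero =>
      intro _
      refine ⟨fun y => (f (k 0) - m 0 * k 0) + m 0 * y, haff _ _, fun y _ => by ring, ?_⟩
      intro y hy
      have hk0 : k 0 = u := by simp [hk]
      have : y = k 0 := le_antisymm hy.2 (hk0.le.trans hy.1)
      rw [this]
      simp [hε.le]
    | succ n ih =>
      intro hn
      obtain ⟨g, hQ, hg1, hg2⟩ := ih (by omega)
      refine ⟨_, hhinge g _ (k (n + 1)) hQ (hmono n), fun y hy => ?_, fun y hy => ?_⟩
      · rw [max_eq_left (by linarith), hg1 y (by linarith [hksucc n]), hksucc n,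
          ← sub_eq_zero]
        have := hmδ n
        rw [hksucc n] at this
        linarith
      · rw [max_eq_right (by linarith [hy.2]), mul_zero, add_zero]
        rcases le_total y (k n) with h | h
        · exact hg2 y ⟨hy.1, h⟩
        · rw [hg1 y h]
          exact hcell hn ⟨h, hy.2⟩
  obtain ⟨g, hQ, -, hg⟩ := hind N le_rfl
  refine ⟨g, hQ, ?_⟩
  have : k N = v := hNδ
  rwa [this] at hg

lemma convexOn_integral_comp_add_mul {S : ℝ → ℝ} {r α₀ α₁ : ℝ} (hr : 0 ≤ r) (hS : ∀ x, 0 ≤ S x)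
    (habs : ∀ k, ConvexOn ℝ Set.univ fun x => ∫ w in -r..r, |α₀ + α₁ * x - k + S x * w|)
    {f : ℝ → ℝ} (hf : ConvexOn ℝ Set.univ f) :
    ConvexOn ℝ Set.univ fun x => ∫ w in -r..r, f (α₀ + α₁ * x + S x * w) := by
  have hcont : Continuous f := by
    rw [← continuousOn_univ]; exact hf.continuousOn isOpen_univ
  have h_int {g : ℝ → ℝ} (hg : Continuous g) (x : ℝ) :
      IntervalIntegrable (fun w => g (α₀ + α₁ * x + S x * w)) volume (-r) r :=
    Continuous.intervalIntegrable (by fun_prop) _ _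
  let Q : (ℝ → ℝ) → Prop := fun g => Continuous g ∧
    ConvexOn ℝ Set.univ fun x => ∫ w in -r..r, g (α₀ + α₁ * x + S x * w)
  have hconv_aff (α β : ℝ) : ConvexOn ℝ Set.univ
      fun x => ∫ w in -r..r, (α + β * (α₀ + α₁ * x + S x * w)) := by
    have : (fun x => ∫ w in -r..r, (α + β * (α₀ + α₁ * x + S x * w)))
        = fun x => 2 * r * (α + β * (α₀ + α₁ * x)) := by
      ext x
      have : (fun w => α + β * (α₀ + α₁ * x + S x * w))
          = fun w => (α + β * (α₀ + α₁ * x)) + β * S x * w := by ext w; ring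
      rw [this, intervalIntegral.integral_add (by simp) (by
        exact (continuous_const.mul continuous_id).intervalIntegrable _ _),
        intervalIntegral.integral_const_mul, integral_id]
      simp; ring
    rw [this]
    exact convexOn_univ_of_forall_exists_support fun x₀ =>
      ⟨2 * r * β * α₁, fun x => le_of_eq (by ring)⟩
  have hconv_hinge (k : ℝ) : ConvexOn ℝ Set.univ
      fun x => ∫ w in -r..r, max (α₀ + α₁ * x + S x * w - k) 0 := by
    have hmax (v : ℝ) : max v 0 = 1 / 2 * |v| + 1 / 2 * v := by
      rcases le_total 0 v with hv | hv
      · rw [max_eq_left hv, abs_of_nonneg hv]; ring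
      · rw [max_eq_right hv, abs_of_nonpos hv]; ring
    refine (((habs k).smul (by norm_num : (0 : ℝ) ≤ 1 / 2)).add
      (hconv_aff (-k / 2) (1 / 2))).congr fun x _ => ?_
    change (1 / 2 : ℝ) * _ + _ = _
    rw [← intervalIntegral.integral_const_mul, ← intervalIntegral.integral_add
      (Continuous.intervalIntegrable (by fun_prop) _ _)
      (Continuous.intervalIntegrable (by fun_prop) _ _)]
    refine intervalIntegral.integral_congr fun w _ => ?_
    simp only [hmax, add_sub_right_comm _ (S x * w) k]
    ring
  have hQ_aff (α β : ℝ) : Q fun y => α + β * y := ⟨by fun_prop, hconv_aff α β⟩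
  have hQ_hinge (g : ℝ → ℝ) (c k : ℝ) (hg : Q g) (hc : 0 ≤ c) :
      Q fun y => g y + c * max (y - k) 0 := by
    obtain ⟨hg1, hg2⟩ := hg
    refine ⟨by fun_prop, ?_⟩
    refine (hg2.add ((hconv_hinge k).smul hc)).congr fun x _ => ?_
    change _ + c * _ = _
    rw [← intervalIntegral.integral_const_mul, ← intervalIntegral.integral_add
      (h_int hg1 x) (Continuous.intervalIntegrable (by fun_prop) _ _)]
  refine ⟨convex_univ, fun x _ y _ μ ν hμ hν hμν => ?_⟩
  simp only [smul_eq_mul]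
  refine le_of_forall_pos_le_add fun ε hε => ?_
  set z := μ * x + ν * y with hz
  let B : ℝ → ℝ := fun t => |α₀ + α₁ * t| + S t * r
  have hB (t : ℝ) : 0 ≤ B t := add_nonneg (abs_nonneg _) (mul_nonneg (hS t) hr)
  set M := B x + B y + B z + 1 with hM
  have hxM : B x ≤ M := by linarith [hB x, hB y, hB z]
  have hyM : B y ≤ M := by linarith [hB x, hB y, hB z]
  have hzM : B z ≤ M := by linarith [hB x, hB y, hB z]
  obtain ⟨g, ⟨hg1, hg2⟩, hgf⟩ := hf.exists_piecewise_affine_approx hQ_aff hQ_hinge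
    (u := -M) (v := M) (ε := ε / (4 * r + 1)) (by linarith [hB x, hB y, hB z]) (by positivity)
  have hclose (t : ℝ) (ht : B t ≤ M) :
      |(∫ w in -r..r, g (α₀ + α₁ * t + S t * w)) - ∫ w in -r..r, f (α₀ + α₁ * t + S t * w)|
        ≤ ε / 2 := by
    rw [← intervalIntegral.integral_sub (h_int hg1 t) (h_int hcont t)]
    have h1 := intervalIntegral.norm_integral_le_of_norm_le_const (a := -r) (b := r)
      (f := fun w => g (α₀ + α₁ * t + S t * w) - f (α₀ + α₁ * t + S t * w))
      (C := ε / (4 * r + 1)) fun w hw => by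
        rw [Set.uIoc_of_le (by linarith)] at hw
        refine hgf _ (abs_le.1 ?_)
        refine (abs_add_le _ _).trans (le_trans ?_ ht)
        rw [abs_mul, abs_of_nonneg (hS t)]
        have : |w| ≤ r := abs_le.2 ⟨hw.1.le, hw.2⟩
        have := mul_le_mul_of_nonneg_left this (hS t)
        simp only [B]
        linarith
    rw [Real.norm_eq_abs] at h1
    refine h1.trans ?_
    rw [abs_of_nonneg (by linarith), div_mul_eq_mul_div,
      div_le_div_iff₀ (by positivity) (by norm_num)]
    nlinarith
  have h1 := hg2.2 (Set.mem_univ x) (Set.mem_univ y) hμ hν hμν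
  simp only [smul_eq_mul, ← hz] at h1
  have hx := mul_le_mul_of_nonneg_left (abs_le.1 (hclose x hxM)).2 hμ
  have hy := mul_le_mul_of_nonneg_left (abs_le.1 (hclose y hyM)).2 hν
  have hz' := (abs_le.1 (hclose z hzM)).1
  obtain rfl : μ = 1 - ν := by linarith
  linarith

lemma hasDerivAt_integral_neg_self {F : ℝ → ℝ} (hF : Continuous F) (r : ℝ) :
    HasDerivAt (fun r => ∫ w in -r..r, F w) (F r + F (-r)) r := by
  have h1 (r : ℝ) : HasDerivAt (fun r => ∫ w in 0..r, F w) (F r) r :=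
    intervalIntegral.integral_hasDerivAt_right (hF.intervalIntegrable _ _)
      (hF.stronglyMeasurableAtFilter _ _) hF.continuousAt
  have h2 := (h1 r).sub ((h1 (-r)).scomp r (hasDerivAt_neg r))
  rw [neg_one_smul, sub_neg_eq_add] at h2
  refine h2.congr_of_eventuallyEq (Filter.Eventually.of_forall fun r => ?_)
  exact (intervalIntegral.integral_interval_sub_left (hF.intervalIntegrable _ _)
    (hF.intervalIntegrable _ _)).symm

lemma integral_mul_eq_of_even {F φ φ' : ℝ → ℝ} {b : ℝ} (hF : Continuous F)
    (hφ : ∀ w, HasDerivAt φ (φ' w) w) (hφ' : Continuous φ') (heven : ∀ w, φ (-w) = φ w) :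
    ∫ w in -b..b, F w * φ w
      = φ b * (∫ w in -b..b, F w) + ∫ r in 0..b, (-φ' r) * ∫ w in -r..r, F w := by
  have hφc : Continuous φ := continuous_iff_continuousAt.2 fun w => (hφ w).continuousAt
  have hparts := intervalIntegral.integral_mul_deriv_eq_deriv_mul (a := 0) (b := b)
    (fun x _ => hφ x) (fun x _ => hasDerivAt_integral_neg_self hF x) (hφ'.intervalIntegrable _ _)
    (Continuous.intervalIntegrable (by fun_prop) _ _)
  have h_int (u v : ℝ) : IntervalIntegrable (fun w => F w * φ w) volume u v :=
    (hF.mul hφc).intervalIntegrable _ _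
  have hsplit : ∫ w in -b..b, F w * φ w = ∫ w in 0..b, φ w * (F w + F (-w)) := by
    rw [← intervalIntegral.integral_add_adjacent_intervals (h_int (-b) 0) (h_int 0 b)]
    have : ∫ w in -b..0, F w * φ w = ∫ w in 0..b, F (-w) * φ w := by
      rw [← neg_zero, ← intervalIntegral.integral_comp_neg]
      simp only [heven, neg_zero]
    rw [this, ← intervalIntegral.integral_add
      (Continuous.intervalIntegrable (by fun_prop) _ _) (h_int 0 b)]
    exact intervalIntegral.integral_congr fun w _ => by ring
  rw [hsplit, hparts]
  simp only [neg_zero, intervalIntegral.integral_same, mul_zero, neg_mul,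
    intervalIntegral.integral_neg]
  ring

lemma convexOn_integral_mul_of_even {Φ : ℝ → ℝ → ℝ} {φ φ' : ℝ → ℝ} {b : ℝ} (hb : 0 ≤ b)
    (hΦ : ∀ x, Continuous (Φ x)) (hφ : ∀ w, HasDerivAt φ (φ' w) w) (hφ' : Continuous φ')
    (heven : ∀ w, φ (-w) = φ w) (hφ0 : 0 ≤ φ b) (hφ'0 : ∀ w, 0 ≤ w → φ' w ≤ 0)
    (hconv : ∀ r, 0 ≤ r → r ≤ b → ConvexOn ℝ Set.univ fun x => ∫ w in -r..r, Φ x w) :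
    ConvexOn ℝ Set.univ fun x => ∫ w in -b..b, Φ x w * φ w := by
  have heq : (fun x => ∫ w in -b..b, Φ x w * φ w) = fun x =>
      φ b * (∫ w in -b..b, Φ x w) + ∫ r in 0..b, (-φ' r) * ∫ w in -r..r, Φ x w :=
    funext fun x => integral_mul_eq_of_even (hΦ x) hφ hφ' heven
  have h_int (x : ℝ) :
      IntervalIntegrable (fun r => (-φ' r) * ∫ w in -r..r, Φ x w) volume 0 b := by
    refine Continuous.intervalIntegrable (hφ'.neg.mul ?_) _ _
    exact continuous_iff_continuousAt.2 fun r =>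
      (hasDerivAt_integral_neg_self (hΦ x) r).continuousAt
  rw [heq]
  refine ((hconv b hb le_rfl).smul hφ0).add ⟨convex_univ, fun x _ y _ μ ν hμ hν hμν => ?_⟩
  simp only [smul_eq_mul]
  rw [← intervalIntegral.integral_const_mul, ← intervalIntegral.integral_const_mul,
    ← intervalIntegral.integral_add ((h_int x).const_mul μ) ((h_int y).const_mul ν)]
  refine intervalIntegral.integral_mono_on hb (h_int _)
    (((h_int x).const_mul μ).add ((h_int y).const_mul ν)) fun r hr => ?_
  have h1 := mul_le_mul_of_nonneg_left
    ((hconv r hr.1 hr.2).2 (Set.mem_univ x) (Set.mem_univ y) hμ hν hμν)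
    (neg_nonneg.2 (hφ'0 r hr.1))
  simp only [smul_eq_mul] at h1
  linarith

lemma integral_gaussianReal_truncated {F : ℝ → ℝ} (hF : Continuous F) {b : ℝ} (hb : 0 ≤ b) :
    ∫ z, F (if |z| ≤ b then z else 0) ∂gaussianReal 0 1
      = (∫ w in -b..b, F w * gaussianPDFReal 0 1 w)
        + (gaussianReal 0 1).real (Set.Icc (-b) b)ᶜ * F 0 := by
  have hmeas : MeasurableSet (Set.Icc (-b) b) := measurableSet_Icc
  have hmem (z : ℝ) : |z| ≤ b ↔ z ∈ Set.Icc (-b) b := abs_le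
  have h_int : Integrable (fun z => F (if |z| ≤ b then z else 0)) (gaussianReal 0 1) := by
    obtain ⟨C, hC⟩ :=
      (isCompact_Icc (a := -b) (b := b)).exists_bound_of_continuousOn hF.continuousOn
    refine Integrable.of_bound (Measurable.aestronglyMeasurable ?_) C
      (Filter.Eventually.of_forall fun z => hC _ ?_)
    · exact hF.measurable.comp (Measurable.ite (by simp only [hmem]; exact hmeas)
        measurable_id measurable_const)
    · split_ifs with hz
      · exact (hmem z).1 hz
      · exact ⟨by linarith, hb⟩
  rw [← integral_add_compl hmeas h_int]
  congr 1
  · rw [setIntegral_congr_fun (g := F) hmeas fun z hz => by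
        simp only [if_pos ((hmem z).2 hz)],
      gaussianReal_of_var_ne_zero 0 one_ne_zero,
      setIntegral_withDensity_eq_setIntegral_toReal_smul (measurable_gaussianPDF 0 1)
        (Filter.Eventually.of_forall fun z => gaussianPDF_lt_top) F hmeas,
      intervalIntegral.integral_of_le (by linarith), ← integral_Icc_eq_integral_Ioc]
    refine setIntegral_congr_fun hmeas fun z _ => ?_
    simp only [toReal_gaussianPDF, smul_eq_mul]
    ring
  · rw [setIntegral_congr_fun (g := fun _ => F 0) hmeas.compl fun z hz => by
        simp only [if_neg (fun h => hz ((hmem z).1 h))]]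
    simp

lemma hasDerivAt_gaussianPDFReal_zero_one (w : ℝ) :
    HasDerivAt (gaussianPDFReal 0 1) (-w * gaussianPDFReal 0 1 w) w := by
  have h1 : HasDerivAt (fun w : ℝ => -(w - 0) ^ 2 / (2 * ((1 : NNReal) : ℝ))) (-w) w := by
    have := (((hasDerivAt_id w).sub_const 0).pow 2).neg.div_const (2 * ((1 : NNReal) : ℝ))
    refine this.congr_deriv ?_
    simp
    ring
  have h2 := h1.exp.const_mul (√(2 * Real.pi * ((1 : NNReal) : ℝ)))⁻¹
  rw [gaussianPDFReal_def]
  exact h2.congr_deriv (by ring)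

/-- **The truncated Euler step with affine drift propagates convexity (convex order).**
Under the standing assumptions (`σ ≥ 0` Lipschitz and semi-convex, `β` convex with
`β + c·id` nondecreasing, `2ch < 1`, `λ ∈ (0, 1/(2+√2))`, threshold
`s_h = λ/√(h(L² + a))`), if moreover `β` is affine, then for every convex `f : ℝ → ℝ`
the map `x ↦ E f(E^h(x, Z̃^h))` is convex. -/
theorem truncatedEuler_convexOrder_convex {Ω : Type*} [MeasurableSpace Ω]
    (P : Measure Ω) [IsProbabilityMeasure P]
    (Z : Ω → ℝ) (hZmeas : Measurable Z) (hZ : Measure.map Z P = gaussianReal 0 1)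
    (σ β : ℝ → ℝ) (L : ℝ) (hL : 0 < L)
    (hσ0 : ∀ x, 0 ≤ σ x) (hσLip : ∀ x y, |σ x - σ y| ≤ L * |x - y|)
    (a : ℝ) (ha : 0 ≤ a) (hsc : ConvexOn ℝ Set.univ fun x => σ x ^ 2 + a * x ^ 2)
    (hβ : ConvexOn ℝ Set.univ β)
    (c : ℝ) (hc : 0 ≤ c) (hmono : Monotone fun x => β x + c * x)
    (b₀ b₁ : ℝ) (hβaff : ∀ x, β x = b₀ + b₁ * x)
    (h : ℝ) (hh : 0 < h) (hch : 2 * c * h < 1)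
    (lam : ℝ) (hlam : lam ∈ Set.Ioo 0 (1 / (2 + Real.sqrt 2)))
    (f : ℝ → ℝ) (hfcvx : ConvexOn ℝ Set.univ f) :
    ConvexOn ℝ Set.univ fun x =>
      ∫ ω, f (x + h * β x + Real.sqrt h * σ x *
        (if |Z ω| ≤ lam / Real.sqrt (h * (L ^ 2 + a)) then Z ω else 0)) ∂P := by
  obtain ⟨hlam0, hlam1⟩ := hlam
  have hcont : Continuous f := by
    rw [← continuousOn_univ]; exact hfcvx.continuousOn isOpen_univ
  have hsq2 : Real.sqrt 2 ^ 2 = 2 := Real.sq_sqrt (by norm_num)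
  have hsqh : Real.sqrt h ^ 2 = h := Real.sq_sqrt hh.le
  have hb₁ : -c ≤ b₁ := by
    have := hmono (zero_le_one (α := ℝ))
    simp only [hβaff] at this
    linarith
  have hα : 1 / 2 < 1 + h * b₁ := by nlinarith
  have hK : 0 < h * (L ^ 2 + a) := by positivity
  set b := lam / Real.sqrt (h * (L ^ 2 + a)) with hb_def
  have hb : 0 < b := div_pos hlam0 (Real.sqrt_pos.2 hK)
  have hbK : b ^ 2 * (h * (L ^ 2 + a)) = lam ^ 2 := by
    rw [hb_def, div_pow, Real.sq_sqrt hK.le, div_mul_cancel₀ _ hK.ne']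
  rw [lt_div_iff₀ (by positivity)] at hlam1
  have hθ1 : 2 * lam < 1 := by nlinarith [Real.sqrt_nonneg 2]
  have hθ : (2 * lam) ^ 2 ≤ 2 * (1 - 2 * lam) ^ 2 := by
    have h1 : Real.sqrt 2 * lam ≤ 1 - 2 * lam := by linarith
    have h2 := pow_le_pow_left₀ (by positivity) h1 2
    rw [mul_pow, hsq2] at h2
    linarith
  have hconv (r : ℝ) (hr0 : 0 ≤ r) (hrb : r ≤ b) : ConvexOn ℝ Set.univ fun x =>
      ∫ w in -r..r, f (h * b₀ + (1 + h * b₁) * x + Real.sqrt h * σ x * w) := by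
    refine convexOn_integral_comp_add_mul (S := fun x => Real.sqrt h * σ x) hr0
      (fun x => mul_nonneg (Real.sqrt_nonneg h) (hσ0 x)) (fun k => ?_) hfcvx
    have h1 := convexOn_uniformMeanAbs (θ := 2 * lam) (l := r * (Real.sqrt h * L))
      (a := r ^ 2 * h * a) (α₀ := h * b₀ - k) (α₁ := 1 + h * b₁)
      (T := fun x => r * (Real.sqrt h * σ x)) (by linarith) hθ1 hθ (by positivity) (by positivity)
      (by linarith) ?_
      (fun x => mul_nonneg hr0 (mul_nonneg (Real.sqrt_nonneg h) (hσ0 x))) ?_ ?_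
    · refine (h1.smul (by linarith : 0 ≤ 2 * r)).congr fun x _ => ?_
      have := integral_abs_add_mul hr0 (mul_nonneg (Real.sqrt_nonneg h) (hσ0 x))
        (h * b₀ - k + (1 + h * b₁) * x)
      simp only [smul_eq_mul]
      rw [← this, sub_add_eq_add_sub]
    · calc (r * (Real.sqrt h * L)) ^ 2 + r ^ 2 * h * a = r ^ 2 * (h * (L ^ 2 + a)) := by
            rw [mul_pow, mul_pow, hsqh]; ring
        _ ≤ b ^ 2 * (h * (L ^ 2 + a)) := by gcongr
        _ = (lam * 1) ^ 2 := by rw [hbK, mul_one]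
        _ ≤ (lam * (2 * (1 + h * b₁))) ^ 2 := by gcongr; linarith
        _ = _ := by ring
    · intro x y
      rw [← mul_sub, ← mul_sub, abs_mul, abs_mul, abs_of_nonneg hr0,
        abs_of_nonneg (Real.sqrt_nonneg h), mul_assoc, mul_assoc]
      gcongr
      exact hσLip x y
    · refine (hsc.smul (by positivity : 0 ≤ r ^ 2 * h)).congr fun x _ => ?_
      simp only [smul_eq_mul, mul_pow, hsqh]
      ring
  have hmain := convexOn_integral_mul_of_even (b := b) (φ := gaussianPDFReal 0 1)
    (Φ := fun x w => f (h * b₀ + (1 + h * b₁) * x + Real.sqrt h * σ x * w)) hb.le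
    (fun x => by fun_prop) hasDerivAt_gaussianPDFReal_zero_one
    (continuous_neg.mul (continuous_iff_continuousAt.2 fun w =>
      (hasDerivAt_gaussianPDFReal_zero_one w).continuousAt))
    (fun w => by simp [gaussianPDFReal_def]) (gaussianPDFReal_nonneg _ _ _)
    (fun w hw => mul_nonpos_of_nonpos_of_nonneg (by linarith) (gaussianPDFReal_nonneg _ _ _))
    hconv
  have hatom : ConvexOn ℝ Set.univ fun x => f (h * b₀ + (1 + h * b₁) * x) := by
    refine ⟨convex_univ, fun x _ y _ μ ν hμ hν hμν => ?_⟩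
    refine le_trans (le_of_eq (congrArg f ?_))
      (hfcvx.2 (Set.mem_univ _) (Set.mem_univ _) hμ hν hμν)
    simp only [smul_eq_mul]
    obtain rfl : μ = 1 - ν := by linarith
    ring
  refine (hmain.add (hatom.smul
    (measureReal_nonneg (μ := gaussianReal 0 1) (s := (Set.Icc (-b) b)ᶜ)))).congr fun x _ => ?_
  have hF : Continuous fun z => f (h * b₀ + (1 + h * b₁) * x + Real.sqrt h * σ x * z) := by
    fun_prop
  have hstep := integral_gaussianReal_truncated hF hb.le
  rw [mul_zero, add_zero] at hstep
  refine hstep.symm.trans ?_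
  rw [← hZ, integral_map hZmeas.aemeasurable]
  · have : x + h * β x = h * b₀ + (1 + h * b₁) * x := by rw [hβaff]; ring
    rw [this]
  · refine Measurable.aestronglyMeasurable (hF.measurable.comp
      (Measurable.ite ?_ measurable_id measurable_const))
    exact measurableSet_le measurable_norm measurable_const
end
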